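/- For all integers k ≥ 5 and ℓ ≥ 3, there exists a 2-contractible k-tree T that contains the k-uniform linear cycle C^(k)_ℓ as a subgraph and has cross-cut number σ(T) = ⌊(ℓ+1)/2⌋. -/

import Mathlib

open Finset Filter

attribute [local instance] Classical.propDecidable

/-- The vertex set `[n] = {1,…,n}`. -/
def vtx (n : ℕ) : Finset ℕ := Finset.Icc 1 n

/-- `F` is a `k`-graph on `[n]`: a family of `k`-element subsets of `[n]`. -/
def IsKGraphOn (k n : ℕ) (F : Finset (Finset ℕ)) : Prop :=
  ∀ E ∈ F, E ⊆ vtx n ∧ E.card = k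

/-- The vertex set of a hypergraph (union of its edges). -/
def vertexSet {α : Type} [DecidableEq α] (H : Finset (Finset α)) : Finset α := H.sup id

/-- The degree of a vertex: the number of edges containing it. -/
def vdeg {α : Type} [DecidableEq α] (H : Finset (Finset α)) (v : α) : ℕ :=
  (H.filter fun E => v ∈ E).card

/-- Hypertrees, defined recursively: a single edge is a hypertree, and a hypertree grows
by adding a new leaf edge `E` whose intersection with the current vertex set equals its
intersection with some existing (parent) edge `F`. -/
inductive IsHypertree {α : Type} [DecidableEq α] : Finset (Finset α) → Prop
  | single (E : Finset α) : IsHypertree {E}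
  | grow {H : Finset (Finset α)} (E F : Finset α) (hH : IsHypertree H) (hE : E ∉ H)
      (hF : F ∈ H) (hint : E ∩ vertexSet H = E ∩ F) : IsHypertree (insert E H)

/-- A `k`-tree: a `k`-uniform hypertree. -/
def IsKTree {α : Type} [DecidableEq α] (k : ℕ) (H : Finset (Finset α)) : Prop :=
  IsHypertree H ∧ ∀ E ∈ H, E.card = k

/-- A hypergraph is 2-contractible if every edge contains at least two vertices of degree 1. -/
def TwoContractible {α : Type} [DecidableEq α] (H : Finset (Finset α)) : Prop :=
  ∀ E ∈ H, 2 ≤ (E.filter fun v => vdeg H v = 1).card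

/-- `S` is a cross-cut of `H`: every edge meets `S` in exactly one vertex. -/
def IsCrosscut {α : Type} [DecidableEq α] (H : Finset (Finset α)) (S : Finset α) : Prop :=
  ∀ E ∈ H, (E ∩ S).card = 1

/-- `σ` is the cross-cut number of `H`: the minimum size of a cross-cut. -/
def IsCrosscutNumber {α : Type} [DecidableEq α] (H : Finset (Finset α)) (σ : ℕ) : Prop :=
  IsLeast {m | ∃ S : Finset α, IsCrosscut H S ∧ S.card = m} σ

/-- A hypergraph is `ℓ`-overlapping if any two distinct edges meet in at most `ℓ` vertices. -/
def Overlapping {α : Type} [DecidableEq α] (ℓ : ℕ) (H : Finset (Finset α)) : Prop :=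
  ∀ E ∈ H, ∀ F ∈ H, E ≠ F → (E ∩ F).card ≤ ℓ

/-- `K` is (the edge set of) a copy of `H`, i.e. the image of `H` under a map that is
injective on the vertex set of `H`. -/
def IsCopyOf {α : Type} [DecidableEq α] (H : Finset (Finset α)) (K : Finset (Finset ℕ)) : Prop :=
  ∃ φ : α → ℕ, Set.InjOn φ ↑(vertexSet H) ∧ K = H.image fun E => E.image φ

/-- `F` contains no subgraph isomorphic to `H`. -/
def HFree {α : Type} [DecidableEq α] (H : Finset (Finset α)) (F : Finset (Finset ℕ)) : Prop :=
  ∀ K ⊆ F, ¬ IsCopyOf H K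

/-- The collection of copies of `H` in `F` (as distinct subgraphs of `F`). -/
noncomputable def copies {α : Type} [DecidableEq α] (H : Finset (Finset α))
    (F : Finset (Finset ℕ)) : Finset (Finset (Finset ℕ)) :=
  F.powerset.filter (IsCopyOf H)

/-- The number of `H`-free `k`-graphs on the vertex set `[n]`. -/
noncomputable def forb {α : Type} [DecidableEq α] (n k : ℕ) (H : Finset (Finset α)) : ℕ :=
  (((vtx n).powersetCard k).powerset.filter (HFree H)).card

/-- `H` is a `k`-uniform linear cycle of length `ℓ`. -/
def IsLinearCycle {α : Type} [DecidableEq α] (k ℓ : ℕ) (H : Finset (Finset α)) : Prop :=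
  ∃ E : ℕ → Finset α,
    (∀ i < ℓ, (E i).card = k) ∧
    (∀ i < ℓ, ∀ j < ℓ, i ≠ j → E i ≠ E j) ∧
    (∀ i < ℓ, (E i ∩ E ((i + 1) % ℓ)).card = 1) ∧
    (∀ i < ℓ, ∀ j < ℓ, i ≠ j → E i ∩ E ((i + 1) % ℓ) ≠ E j ∩ E ((j + 1) % ℓ)) ∧
    (∀ i < ℓ, ∀ j < ℓ, i ≠ j → (i + 1) % ℓ ≠ j → (j + 1) % ℓ ≠ i → Disjoint (E i) (E j)) ∧
    H = (Finset.range ℓ).image E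

/-- `(X 0, …, X (k-1))` is a `k`-partition of `F`. -/
def IsKPartition (k : ℕ) (F : Finset (Finset ℕ)) (X : Fin k → Finset ℕ) : Prop :=
  (∀ i j, i ≠ j → Disjoint (X i) (X j)) ∧ ∀ E ∈ F, ∀ i, (E ∩ X i).card = 1

/-- The `J`-projection of an edge. -/
def projJ {k : ℕ} (X : Fin k → Finset ℕ) (J : Finset (Fin k)) (E : Finset ℕ) : Finset ℕ :=
  E ∩ J.sup X

/-- The pattern of a vertex set. -/
def pattern {k : ℕ} (X : Fin k → Finset ℕ) (D : Finset ℕ) : Finset (Fin k) :=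
  Finset.univ.filter fun i => (D ∩ X i).Nonempty

/-- `MI(F)`: the patterns of intersections of pairs of distinct edges. -/
noncomputable def MI {k : ℕ} (F : Finset (Finset ℕ)) (X : Fin k → Finset ℕ) :
    Finset (Finset (Fin k)) :=
  ((F ×ˢ F).filter fun p => p.1 ≠ p.2).image fun p => pattern X (p.1 ∩ p.2)

/-- The link of a vertex set `D` in `F`. -/
def link {α : Type} [DecidableEq α] (F : Finset (Finset α)) (D : Finset α) :
    Finset (Finset α) :=
  (F.filter fun E => D ⊆ E).image fun E => E \ D

/-- The degree of a vertex set `D` in `F`: the size of its link. -/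
def setDeg {α : Type} [DecidableEq α] (F : Finset (Finset α)) (D : Finset α) : ℕ :=
  (link F D).card

/-- A nonempty hypergraph is `s`-diverse if every vertex has degree less than `|H|/s`. -/
def SDiverse {α : Type} [DecidableEq α] (s : ℕ) (H : Finset (Finset α)) : Prop :=
  H.Nonempty ∧ ∀ v : α, s * vdeg H v < H.card

/-- `D` is `s`-strong in `F` if its link is `s`-diverse. -/
def SStrong {α : Type} [DecidableEq α] (s : ℕ) (F : Finset (Finset α)) (D : Finset α) : Prop :=
  SDiverse s (link F D)

/-- `F`, with `k`-partition `X`, is `s`-super-homogeneous: for every `J ∈ MI(F)` and every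
edge `E ∈ F`, the projection `E_J` is `s`-strong and `d_F(E_J) ≥ max{s, |F|/(2k·n^|J|)}`. -/
def SuperHomogeneous (n k s : ℕ) (F : Finset (Finset ℕ)) (X : Fin k → Finset ℕ) : Prop :=
  ∀ J ∈ MI F X, ∀ E ∈ F,
    SStrong s F (projJ X J E) ∧
    s ≤ setDeg F (projJ X J E) ∧
    (F.card : ℝ) / (2 * k * (n : ℝ) ^ J.card) ≤ (setDeg F (projJ X J E) : ℝ)

/-- The rank of a family of subsets of `[k]`: the minimum size of a set `D ⊆ [k]` contained
in no member of the family. -/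
noncomputable def rankFam (k : ℕ) (𝒥 : Finset (Finset (Fin k))) : ℕ :=
  sInf {d | ∃ D : Finset (Fin k), D.card = d ∧ ∀ J ∈ 𝒥, ¬ D ⊆ J}

/-- A family of subsets of `[k]` is of type 1 if it contains the full power set of some
`(k-2)`-set `B`. -/
def TypeOne (k : ℕ) (𝒥 : Finset (Finset (Fin k))) : Prop :=
  ∃ B : Finset (Fin k), B.card = k - 2 ∧ ∀ S ⊆ B, S ∈ 𝒥

/-- The constant `c(k,s) = k!/(k^k·(2s(1+2^k))^(2^k))`. -/
noncomputable def cks (k s : ℕ) : ℝ :=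
  (Nat.factorial k : ℝ) / ((k : ℝ) ^ k * (2 * (s : ℝ) * (1 + 2 ^ k)) ^ (2 ^ k))

/-- Degree of a set of vertices in a (uniform) hypergraph `K`: number of edges containing it. -/
def uDeg {α : Type} [DecidableEq α] (K : Finset (Finset α)) (S : Finset α) : ℕ :=
  (K.filter fun e => S ⊆ e).card

/-- A `t`-uniform hypergraph is `d`-graded if `d_K(S) ≤ d^(t-|S|)` for all `S` with
`1 ≤ |S| ≤ t`. -/
def Graded {α : Type} [DecidableEq α] (t : ℕ) (d : ℝ) (K : Finset (Finset α)) : Prop :=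
  ∀ S : Finset α, 1 ≤ S.card → S.card ≤ t → (uDeg K S : ℝ) ≤ d ^ (t - S.card)

/-- `S` is saturated by `K`: `d_K(S) = ⌊d^(t-|S|)⌋`. -/
def Saturated {α : Type} [DecidableEq α] (t : ℕ) (d : ℝ) (K : Finset (Finset α))
    (S : Finset α) : Prop :=
  uDeg K S = ⌊d ^ (t - S.card)⌋₊

/-- `S` is admissible: no nonempty subset of `S` is saturated. -/
def Admissible {α : Type} [DecidableEq α] (t : ℕ) (d : ℝ) (K : Finset (Finset α))
    (S : Finset α) : Prop :=
  ∀ S' ⊆ S, S'.Nonempty → ¬ Saturated t d K S'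

/-- `Z_K(S)`: the vertices `v` such that `S ∪ {v}` is inadmissible and `{v}` is not
saturated. -/
noncomputable def Zset {α : Type} [DecidableEq α] (t : ℕ) (d : ℝ) (K : Finset (Finset α))
    (S : Finset α) : Finset α :=
  (vertexSet K).filter fun v => ¬ Admissible t d K (insert v S) ∧ ¬ Saturated t d K {v}

/-- `ex(G,H)`: the maximum number of edges of an `H`-free subgraph of `G`. -/
noncomputable def exIn {α : Type} [DecidableEq α] (H : Finset (Finset α))
    (G : Finset (Finset ℕ)) : ℕ :=
  (G.powerset.filter (HFree H)).sup Finset.card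

/-- The probability, in the random `k`-graph `G^(k)(n,p)` (each `k`-subset of `[n]` is an
edge independently with probability `p`), of the event `A`. -/
noncomputable def probEvent (k n : ℕ) (p : ℝ) (A : Finset (Finset ℕ) → Prop) : ℝ :=
  ∑ G ∈ ((vtx n).powersetCard k).powerset.filter A,
    p ^ G.card * (1 - p) ^ (((vtx n).powersetCard k).card - G.card)

/-!
With `n + 1 = (ℓ + 1) / 2`, the tree is the `k`-expansion of a hypertree of edges of size at most
three on `0, …, 2n + 1`: the triangles `{0, 2j + 1, 2j + 3}` and the ears
`{2j + 1, 2j + 2, 2j + 3}`, each glued to an earlier edge along a pair, together with the sides of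
the `(2n + 2)`-gon and the diagonals from `0`, each contained in a triangle. Since `k ≥ 5`, every
edge receives two private vertices, which makes the expansion 2-contractible. Expanding the sides
gives a linear cycle of length `2n + 2`, and replacing the two sides at the corner `2` by the ear
`{1, 2, 3}` gives one of length `2n + 1`. The even corners form a cross-cut of size `n + 1`, and
there is no smaller one because the `n + 1` sides `{2i, 2i + 1}` are pairwise disjoint.
-/

section Hypergraph

variable {α : Type} [DecidableEq α] {H : Finset (Finset α)}

lemma mem_vertexSet {v : α} : v ∈ vertexSet H ↔ ∃ E ∈ H, v ∈ E := by
  simp [vertexSet, Finset.mem_sup]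

lemma vertexSet_insert (E : Finset α) : vertexSet (insert E H) = E ∪ vertexSet H :=
  sup_insert

lemma IsHypertree.insert_of_inter_subset {E F : Finset α} (hH : IsHypertree H) (hF : F ∈ H)
    (hEF : E ∩ vertexSet H ⊆ F) : IsHypertree (insert E H) := by
  by_cases hE : E ∈ H
  · rwa [insert_eq_of_mem hE]
  · have hFH : F ⊆ vertexSet H := fun v hv => mem_vertexSet.2 ⟨F, hF, hv⟩
    exact hH.grow E F hE hF ((subset_inter inter_subset_left hEF).antisymm
      (inter_subset_inter_left hFH))

lemma IsHypertree.insert_of_subset {E F : Finset α} (hH : IsHypertree H) (hF : F ∈ H)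
    (hEF : E ⊆ F) : IsHypertree (insert E H) :=
  hH.insert_of_inter_subset hF (inter_subset_left.trans hEF)

lemma IsCrosscut.card_le_of_pairwiseDisjoint {ι : Type*} {S : Finset α} (hS : IsCrosscut H S)
    (s : Finset ι) {M : ι → Finset α} (hM : ∀ i ∈ s, M i ∈ H)
    (hdisj : (s : Set ι).PairwiseDisjoint M) : #s ≤ #S := by
  calc #s = ∑ i ∈ s, #(M i ∩ S) := by
        rw [sum_congr rfl fun i hi => hS (M i) (hM i hi), card_eq_sum_ones]
    _ = #(s.biUnion fun i => M i ∩ S) :=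
        (card_biUnion (hdisj.mono fun i => inter_subset_left)).symm
    _ ≤ #S := card_le_card (biUnion_subset.2 fun _ _ => inter_subset_right)

lemma add_one_mod_eq_or {ℓ i : ℕ} (hi : i < ℓ) :
    i + 1 < ℓ ∧ (i + 1) % ℓ = i + 1 ∨ i = ℓ - 1 ∧ (i + 1) % ℓ = 0 := by
  rcases Nat.lt_or_ge (i + 1) ℓ with h | h
  · exact .inl ⟨h, Nat.mod_eq_of_lt h⟩
  · obtain rfl : ℓ = i + 1 := by omega
    exact .inr ⟨rfl, Nat.mod_self _⟩

lemma isLinearCycle_image_range {k ℓ : ℕ} {E : ℕ → Finset α} {x : ℕ → α}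
    (hE : Set.InjOn E (Set.Iio ℓ)) (hx : Set.InjOn x (Set.Iio ℓ)) (hcard : ∀ i < ℓ, #(E i) = k)
    (hsucc : ∀ i, i + 1 < ℓ → E i ∩ E (i + 1) = {x (i + 1)})
    (hlast : E (ℓ - 1) ∩ E 0 = {x 0})
    (hdisj : ∀ i j, i + 1 < j → j < ℓ → (i = 0 → j ≠ ℓ - 1) → Disjoint (E i) (E j)) :
    IsLinearCycle k ℓ ((range ℓ).image E) := by
  have hinter : ∀ i < ℓ, E i ∩ E ((i + 1) % ℓ) = {x ((i + 1) % ℓ)} := by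
    intro i hi
    rcases add_one_mod_eq_or hi with ⟨h, hm⟩ | ⟨rfl, hm⟩ <;> rw [hm]
    exacts [hsucc i h, hlast]
  have hfar : ∀ i < ℓ, ∀ j < ℓ, i < j → (i + 1) % ℓ ≠ j → (j + 1) % ℓ ≠ i →
      Disjoint (E i) (E j) := by
    intro i hi j hj hij hi' hj'
    have := add_one_mod_eq_or hi
    have := add_one_mod_eq_or hj
    exact hdisj i j (by omega) hj (by omega)
  refine ⟨E, hcard, fun i hi j hj => mt (hE hi hj),
    fun i hi => by rw [hinter i hi, card_singleton], ?_, ?_, rfl⟩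
  · intro i hi j hj hij h
    rw [hinter i hi, hinter j hj, singleton_inj] at h
    have hmod := hx (Nat.mod_lt _ (by omega)) (Nat.mod_lt _ (by omega)) h
    have := add_one_mod_eq_or hi
    have := add_one_mod_eq_or hj
    omega
  · intro i hi j hj hij hi' hj'
    rcases hij.lt_or_gt with h | h
    exacts [hfar i hi j hj h hi' hj', (hfar j hj i hi h hj' hi').symm]

end Hypergraph

section PadEdge

variable {α V : Type} {e : α ⊕ Finset α × ℕ ↪ V} {k : ℕ} {c d : Finset α}

/-- The edge `c` enlarged to `k` vertices by private vertices. The vertices are named by `e`: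
`e (.inl a)` stands for the vertex `a`, and `e (.inr (c, t))` is the `t`-th private vertex of the
edge `c`. Nothing is added when `k ≤ #c`. -/
def padEdge (e : α ⊕ Finset α × ℕ ↪ V) (k : ℕ) (c : Finset α) : Finset V :=
  (c.disjSum ({c} ×ˢ range (k - #c))).map e

@[simp]
lemma inl_mem_padEdge {a : α} : e (.inl a) ∈ padEdge e k c ↔ a ∈ c := by
  simp [padEdge]

@[simp]
lemma inr_mem_padEdge {t : ℕ} : e (.inr (d, t)) ∈ padEdge e k c ↔ d = c ∧ t < k - #c := by
  simp [padEdge, eq_comm, and_comm]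

lemma exists_of_mem_padEdge {v : V} (hv : v ∈ padEdge e k c) : ∃ w, e w = v := by
  obtain ⟨w, -, hw⟩ := Finset.mem_map.1 hv
  exact ⟨w, hw⟩

lemma card_padEdge (hc : #c ≤ k) : #(padEdge e k c) = k := by
  simp [padEdge, hc]

lemma padEdge_injective : Function.Injective (padEdge e k) := by
  intro c d h
  ext a
  rw [← inl_mem_padEdge (e := e) (k := k), h, inl_mem_padEdge]

lemma padEdge_inter_padEdge [DecidableEq α] [DecidableEq V] (hcd : c ≠ d) :
    padEdge e k c ∩ padEdge e k d = (c ∩ d).map (.trans .inl e) := by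
  ext v
  rw [mem_inter, Finset.mem_map]
  constructor
  · rintro ⟨hc, hd⟩
    obtain ⟨a | ⟨b, t⟩, rfl⟩ := exists_of_mem_padEdge hc
    · exact ⟨a, mem_inter.2 ⟨inl_mem_padEdge.1 hc, inl_mem_padEdge.1 hd⟩, rfl⟩
    · exact absurd ((inr_mem_padEdge.1 hc).1.symm.trans (inr_mem_padEdge.1 hd).1) hcd
  · rintro ⟨a, ha, rfl⟩
    exact ⟨inl_mem_padEdge.2 (mem_of_mem_inter_left ha),
      inl_mem_padEdge.2 (mem_of_mem_inter_right ha)⟩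

lemma disjoint_padEdge (hcd : c ≠ d) (h : Disjoint c d) :
    Disjoint (padEdge e k c) (padEdge e k d) := by
  rw [disjoint_iff_inter_eq_empty, padEdge_inter_padEdge hcd, disjoint_iff_inter_eq_empty.1 h,
    Finset.map_empty]

end PadEdge

section Expansion

variable {α V : Type} [DecidableEq V] {e : α ⊕ Finset α × ℕ ↪ V} {k : ℕ}
  {c : Finset α} {H : Finset (Finset α)}

/-- The `k`-expansion of `H`: each edge is enlarged to `k` vertices by its own private vertices,
as prescribed by `padEdge`. -/
def expansion (e : α ⊕ Finset α × ℕ ↪ V) (k : ℕ) (H : Finset (Finset α)) : Finset (Finset V) :=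
  H.image (padEdge e k)

lemma padEdge_mem_expansion (hc : c ∈ H) : padEdge e k c ∈ expansion e k H :=
  mem_image_of_mem _ hc

lemma vdeg_expansion_inr {t : ℕ} (hc : c ∈ H) (ht : t < k - #c) :
    vdeg (expansion e k H) (e (.inr (c, t))) = 1 := by
  refine card_eq_one.2 ⟨padEdge e k c, ?_⟩
  ext E
  simp only [expansion, mem_filter, mem_image, mem_singleton]
  constructor
  · rintro ⟨⟨d, -, rfl⟩, hd⟩
    rw [(inr_mem_padEdge.1 hd).1]
  · rintro rfl
    exact ⟨⟨c, hc, rfl⟩, inr_mem_padEdge.2 ⟨rfl, ht⟩⟩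

lemma twoContractible_expansion (hcard : ∀ c ∈ H, #c + 2 ≤ k) :
    TwoContractible (expansion e k H) := by
  refine forall_mem_image.2 fun c hc => ?_
  have hinj : Function.Injective fun t => e (.inr (c, t)) :=
    e.injective.comp (Sum.inr_injective.comp (Prod.mk_right_injective c))
  calc 2 ≤ k - #c := by have := hcard c hc; omega
    _ = #((range (k - #c)).image fun t => e (.inr (c, t))) := by
        rw [card_image_of_injective _ hinj, card_range]
    _ ≤ _ := card_le_card <| image_subset_iff.2 fun t ht => mem_filter.2
        ⟨inr_mem_padEdge.2 ⟨rfl, mem_range.1 ht⟩, vdeg_expansion_inr hc (mem_range.1 ht)⟩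

variable [DecidableEq α]

lemma isHypertree_expansion (hH : IsHypertree H) : IsHypertree (expansion e k H) := by
  induction hH with
  | single c => exact .single (padEdge e k c)
  | @grow H c d hH hc hd hint ih =>
    rw [expansion, image_insert]
    refine ih.insert_of_inter_subset (padEdge_mem_expansion hd) fun v hv => ?_
    obtain ⟨hvc, hvH⟩ := mem_inter.1 hv
    obtain ⟨E, hE, hvE⟩ := mem_vertexSet.1 hvH
    obtain ⟨c', hc', rfl⟩ := mem_image.1 hE
    have hv : v ∈ (c ∩ c').map (.trans .inl e) := by
      rw [← padEdge_inter_padEdge (ne_of_mem_of_not_mem hc' hc).symm]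
      exact mem_inter.2 ⟨hvc, hvE⟩
    obtain ⟨a, ha, rfl⟩ := Finset.mem_map.1 hv
    have had : a ∈ c ∩ d := by
      rw [← hint]
      exact mem_inter.2 ⟨mem_of_mem_inter_left ha,
        mem_vertexSet.2 ⟨c', hc', mem_of_mem_inter_right ha⟩⟩
    exact inl_mem_padEdge.2 (mem_of_mem_inter_right had)

lemma isKTree_expansion (hH : IsHypertree H) (hcard : ∀ c ∈ H, #c ≤ k) :
    IsKTree k (expansion e k H) :=
  ⟨isHypertree_expansion hH, forall_mem_image.2 fun c hc => card_padEdge (hcard c hc)⟩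

lemma isCrosscut_expansion {S : Finset α} (hS : IsCrosscut H S) :
    IsCrosscut (expansion e k H) (S.map (.trans .inl e)) := by
  refine forall_mem_image.2 fun c hc => ?_
  have hinter : padEdge e k c ∩ S.map (.trans .inl e) = (c ∩ S).map (.trans .inl e) := by
    ext v
    simp only [mem_inter, Finset.mem_map, Function.Embedding.trans_apply,
      Function.Embedding.inl_apply]
    constructor
    · rintro ⟨hv, a, ha, rfl⟩
      exact ⟨a, ⟨inl_mem_padEdge.1 hv, ha⟩, rfl⟩
    · rintro ⟨a, ⟨hac, haS⟩, rfl⟩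
      exact ⟨inl_mem_padEdge.2 hac, a, haS, rfl⟩
  rw [hinter, Finset.card_map, hS c hc]

lemma isCrosscutNumber_expansion {ι : Type*} {S : Finset α} (hS : IsCrosscut H S)
    {s : Finset ι} {M : ι → Finset α} (hM : ∀ i ∈ s, M i ∈ H)
    (hdisj : (s : Set ι).PairwiseDisjoint M) (hcard : #s = #S) :
    IsCrosscutNumber (expansion e k H) #S := by
  refine ⟨⟨_, isCrosscut_expansion hS, card_map _⟩, ?_⟩
  rintro m ⟨S', hS', rfl⟩
  have hne : ∀ i ∈ s, M i ≠ ∅ := fun i hi h => by simpa [h] using hS (M i) (hM i hi)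
  rw [← hcard]
  exact hS'.card_le_of_pairwiseDisjoint s (fun i hi => padEdge_mem_expansion (hM i hi))
    fun i hi j hj hij =>
      disjoint_padEdge ((hdisj hi hj hij).ne (hne i hi)) (hdisj hi hj hij)

end Expansion

section Polygon

variable {α V : Type} [LinearOrder α] [LocallyFiniteOrder α] {x : ℕ → α} {ℓ i j : ℕ}

/-- The `i`-th side of the `ℓ`-gon with corners `x 0 < ⋯ < x (ℓ - 1)`. A side joining two
consecutive corners contains the points between them; the closing side has only its two corners. -/
noncomputable def polygonSide (x : ℕ → α) (ℓ i : ℕ) : Finset α :=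
  if i + 1 < ℓ then Icc (x i) (x (i + 1)) else {x 0, x (ℓ - 1)}

lemma polygonSide_of_lt (h : i + 1 < ℓ) : polygonSide x ℓ i = Icc (x i) (x (i + 1)) :=
  if_pos h

lemma polygonSide_last : polygonSide x ℓ (ℓ - 1) = {x 0, x (ℓ - 1)} :=
  if_neg (by omega)

lemma polygonSide_inter_succ (hx : StrictMono x) (hℓ : 3 ≤ ℓ) (hi : i + 1 < ℓ) :
    polygonSide x ℓ i ∩ polygonSide x ℓ (i + 1) = {x (i + 1)} := by
  have hi₁ : x i < x (i + 1) := hx (by omega)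
  ext v
  rw [polygonSide_of_lt hi, mem_inter, mem_singleton, mem_Icc]
  rcases Nat.lt_or_ge (i + 2) ℓ with h | h
  · have hi₂ : x (i + 1) < x (i + 2) := hx (by omega)
    rw [polygonSide_of_lt h, mem_Icc]
    grind
  · obtain rfl : ℓ = i + 2 := by omega
    have hi₀ : x 0 < x i := hx (by omega)
    rw [show i + 1 = i + 2 - 1 from rfl, polygonSide_last, mem_insert, mem_singleton]
    grind

lemma polygonSide_last_inter_zero (hx : StrictMono x) (hℓ : 3 ≤ ℓ) :
    polygonSide x ℓ (ℓ - 1) ∩ polygonSide x ℓ 0 = {x 0} := by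
  have h₀ : x 0 < x (0 + 1) := hx (by omega)
  have h₁ : x (0 + 1) < x (ℓ - 1) := hx (by omega)
  ext v
  rw [polygonSide_last, polygonSide_of_lt (by omega), mem_inter, mem_insert, mem_singleton, mem_Icc,
    mem_singleton]
  grind

lemma disjoint_polygonSide (hx : StrictMono x) (hij : i + 1 < j) (hj : j < ℓ)
    (hends : i = 0 → j ≠ ℓ - 1) : Disjoint (polygonSide x ℓ i) (polygonSide x ℓ j) := by
  have hij' : x (i + 1) < x j := hx hij
  rw [disjoint_left, polygonSide_of_lt (by omega)]
  intro v hvi hvj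
  rw [mem_Icc] at hvi
  rcases Nat.lt_or_ge (j + 1) ℓ with h | h
  · rw [polygonSide_of_lt h, mem_Icc] at hvj
    grind
  · obtain rfl : j = ℓ - 1 := by omega
    have hi₀ : x 0 < x i := hx (by omega)
    rw [polygonSide_last, mem_insert, mem_singleton] at hvj
    grind

lemma injOn_polygonSide (hx : StrictMono x) (hℓ : 3 ≤ ℓ) :
    Set.InjOn (polygonSide x ℓ) (Set.Iio ℓ) := by
  suffices h : ∀ i j, i < j → j < ℓ → polygonSide x ℓ i ≠ polygonSide x ℓ j by
    intro i hi j hj hij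
    by_contra hne
    rcases Ne.lt_or_gt hne with h' | h'
    exacts [h i j h' hj hij, h j i h' hi hij.symm]
  intro i j hij hj heq
  have hi₁ : x i < x (i + 1) := hx (by omega)
  have hxi : x i ∈ polygonSide x ℓ j := by
    rw [← heq, polygonSide_of_lt (by omega)]
    exact left_mem_Icc.2 hi₁.le
  have hxi' : x (i + 1) ∈ polygonSide x ℓ j := by
    rw [← heq, polygonSide_of_lt (by omega)]
    exact right_mem_Icc.2 hi₁.le
  rcases Nat.lt_or_ge (j + 1) ℓ with h | h
  · rw [polygonSide_of_lt h, mem_Icc] at hxi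
    exact (hx hij).not_ge hxi.1
  · obtain rfl : j = ℓ - 1 := by omega
    simp only [polygonSide_last, mem_insert, mem_singleton, hx.injective.eq_iff] at hxi hxi'
    omega

lemma isLinearCycle_padEdge_polygonSide [DecidableEq V] {e : α ⊕ Finset α × ℕ ↪ V} {k : ℕ}
    (hx : StrictMono x) (hℓ : 3 ≤ ℓ) (hcard : ∀ i < ℓ, #(polygonSide x ℓ i) ≤ k) :
    IsLinearCycle k ℓ ((range ℓ).image fun i => padEdge e k (polygonSide x ℓ i)) := by
  have hne : ∀ i < ℓ, ∀ j < ℓ, i ≠ j → polygonSide x ℓ i ≠ polygonSide x ℓ j :=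
    fun i hi j hj => (injOn_polygonSide hx hℓ).ne hi hj
  refine isLinearCycle_image_range (x := e ∘ .inl ∘ x)
    (padEdge_injective.comp_injOn (injOn_polygonSide hx hℓ))
    (e.injective.comp (Sum.inl_injective.comp hx.injective)).injOn
    (fun i hi => card_padEdge (hcard i hi)) (fun i hi => ?_) ?_ fun i j hij hj hends => ?_
  · rw [padEdge_inter_padEdge (hne i (by omega) (i + 1) hi (by omega)),
      polygonSide_inter_succ hx hℓ hi, map_singleton]
    rfl
  · rw [padEdge_inter_padEdge (hne (ℓ - 1) (by omega) 0 (by omega) (by omega)),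
      polygonSide_last_inter_zero hx hℓ, map_singleton]
    rfl
  · exact disjoint_padEdge (hne i (by omega) j hj (by omega)) (disjoint_polygonSide hx hij hj hends)

end Polygon

section Fan

variable {n : ℕ} {E : Finset ℕ}

/-- The `j`-th block of `fan`: the triangle at the hub `0` over the rim vertices `2j + 1` and
`2j + 3`, the triangle on these and the tip `2j + 2`, and three sides of the two triangles. -/
def fanBlock (j : ℕ) : Finset (Finset ℕ) :=
  {{0, 2 * j + 3}, Icc (2 * j + 2) (2 * j + 3), Icc (2 * j + 1) (2 * j + 2),
    Icc (2 * j + 1) (2 * j + 3), {0, 2 * j + 1, 2 * j + 3}}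

/-- A triangulation of the polygon with corners `0, 1, …, 2n + 1`, together with the sides of the
polygon and the diagonals from `0` to the odd corners. -/
def fan (n : ℕ) : Finset (Finset ℕ) :=
  insert {0, 1} ((range n).biUnion fanBlock)

lemma fan_succ (n : ℕ) : fan (n + 1) = fanBlock n ∪ fan n := by
  rw [fan, fan, range_add_one, biUnion_insert, union_insert]

lemma mem_fan : E ∈ fan n ↔ E = {0, 1} ∨ ∃ j < n, E ∈ fanBlock j := by
  simp [fan]

lemma radius_mem_fan (n : ℕ) : {0, 2 * n + 1} ∈ fan n := by
  cases n with
  | zero => exact mem_insert_self _ _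
  | succ n => exact mem_fan.2 (.inr ⟨n, by omega, mem_insert_self _ _⟩)

lemma Icc_add_one_mem_fan {v : ℕ} (hv : v ≤ 2 * n) : Icc v (v + 1) ∈ fan n := by
  rw [mem_fan]
  rcases Nat.even_or_odd' v with ⟨j, rfl | rfl⟩
  · cases j with
    | zero => exact .inl rfl
    | succ j => exact .inr ⟨j, by omega, by simp [fanBlock, mul_add]⟩
  · exact .inr ⟨j, by omega, by simp [fanBlock]⟩

lemma Icc_one_three_mem_fan (hn : 0 < n) : Icc 1 3 ∈ fan n :=
  mem_fan.2 (.inr ⟨0, hn, by simp [fanBlock]⟩)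

lemma subset_range_of_mem_fan (hE : E ∈ fan n) : E ⊆ range (2 * n + 2) := by
  intro v hv
  rw [mem_range]
  rcases mem_fan.1 hE with rfl | ⟨j, hj, hE⟩
  · simp only [mem_insert, mem_singleton] at hv
    omega
  · simp only [fanBlock, mem_insert, mem_singleton] at hE
    rcases hE with rfl | rfl | rfl | rfl | rfl <;>
      simp only [mem_insert, mem_singleton, mem_Icc] at hv <;> omega

lemma card_le_three_of_mem_fan (hE : E ∈ fan n) : #E ≤ 3 := by
  rcases mem_fan.1 hE with rfl | ⟨j, -, hE⟩
  · simp
  · simp only [fanBlock, mem_insert, mem_singleton] at hE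
    rcases hE with rfl | rfl | rfl | rfl | rfl
    exacts [card_le_two.trans (by omega), by simp, by simp, by simp, card_le_three]

lemma isHypertree_fan (n : ℕ) : IsHypertree (fan n) := by
  induction n with
  | zero => exact .single _
  | succ n ih =>
    have hlt : ∀ v ∈ vertexSet (fan n), v < 2 * n + 2 := by
      intro v hv
      obtain ⟨E, hE, hvE⟩ := mem_vertexSet.1 hv
      exact mem_range.1 (subset_range_of_mem_fan hE hvE)
    have hub_triangle : IsHypertree (insert {0, 2 * n + 1, 2 * n + 3} (fan n)) := by
      refine ih.insert_of_inter_subset (radius_mem_fan n) fun v hv => ?_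
      have := hlt v (mem_of_mem_inter_right hv)
      simp only [mem_inter, mem_insert, mem_singleton] at hv ⊢
      omega
    have rim_triangle : IsHypertree (insert (Icc (2 * n + 1) (2 * n + 3))
        (insert {0, 2 * n + 1, 2 * n + 3} (fan n))) := by
      refine hub_triangle.insert_of_inter_subset (mem_insert_self _ _) fun v hv => ?_
      rw [vertexSet_insert, mem_inter, mem_union] at hv
      obtain ⟨hv, hv' | hv'⟩ := hv
      · exact hv'
      · have := hlt v hv'
        simp only [mem_insert, mem_singleton, mem_Icc] at hv ⊢
        omega
    simp only [fan_succ, fanBlock, insert_union, singleton_union]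
    refine ((rim_triangle.insert_of_subset (mem_insert_self _ _) ?_).insert_of_subset
      (F := Icc (2 * n + 1) (2 * n + 3)) (by simp) ?_).insert_of_subset
      (F := {0, 2 * n + 1, 2 * n + 3}) (by simp) ?_
    · exact Icc_subset_Icc_right (by omega)
    · exact Icc_subset_Icc_left (by omega)
    · simp [insert_subset_iff]

lemma isCrosscut_fan (n : ℕ) : IsCrosscut (fan n) ((range (n + 1)).image (2 * ·)) := by
  suffices h : ∀ E ∈ fan n, ∃ a, ∀ v, v ∈ E ∧ (Even v ∧ v < 2 * n + 2) ↔ v = a by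
    intro E hE
    obtain ⟨a, ha⟩ := h E hE
    refine card_eq_one.2 ⟨a, ?_⟩
    ext v
    rw [mem_inter, mem_singleton, ← ha, mem_image]
    refine and_congr_right fun _ => ⟨?_, ?_⟩
    · rintro ⟨i, hi, rfl⟩
      exact ⟨even_two_mul i, by have := mem_range.1 hi; omega⟩
    · rintro ⟨hv, hvn⟩
      exact ⟨v / 2, mem_range.2 (by omega), Nat.two_mul_div_two_of_even hv⟩
  intro E hE
  rcases mem_fan.1 hE with rfl | ⟨j, hj, hE⟩
  · exact ⟨0, fun v => by simp only [mem_insert, mem_singleton]; grind⟩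
  · simp only [fanBlock, mem_insert, mem_singleton] at hE
    rcases hE with rfl | rfl | rfl | rfl | rfl
    · exact ⟨0, fun v => by simp only [mem_insert, mem_singleton]; grind⟩
    · exact ⟨2 * j + 2, fun v => by simp only [mem_Icc]; grind⟩
    · exact ⟨2 * j + 2, fun v => by simp only [mem_Icc]; grind⟩
    · exact ⟨2 * j + 2, fun v => by simp only [mem_Icc]; grind⟩
    · exact ⟨0, fun v => by simp only [mem_insert, mem_singleton]; grind⟩

/-- The corners of an `ℓ`-gon with sides in `fan n`, for `ℓ = 2n + 1` or `ℓ = 2n + 2`: in the odd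
case the corner `2` is skipped. -/
def fanCorner (n ℓ i : ℕ) : ℕ :=
  if i < 2 then i else i + (2 * n + 2 - ℓ)

lemma strictMono_fanCorner (n ℓ : ℕ) : StrictMono (fanCorner n ℓ) := by
  intro i j hij
  unfold fanCorner
  split_ifs <;> omega

lemma polygonSide_fanCorner_mem_fan {ℓ i : ℕ} (hℓ : 3 ≤ ℓ) (hn : n + 1 = (ℓ + 1) / 2)
    (hi : i < ℓ) : polygonSide (fanCorner n ℓ) ℓ i ∈ fan n := by
  rcases Nat.lt_or_ge (i + 1) ℓ with h | h
  · rw [polygonSide_of_lt h]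
    by_cases hear : i = 1 ∧ ℓ = 2 * n + 1
    · obtain ⟨rfl, rfl⟩ := hear
      have htwo : fanCorner n (2 * n + 1) 2 = 3 := by simp [fanCorner]
      exact htwo ▸ Icc_one_three_mem_fan (by omega)
    · have hstep : fanCorner n ℓ (i + 1) = fanCorner n ℓ i + 1 := by
        unfold fanCorner
        split_ifs <;> omega
      rw [hstep]
      refine Icc_add_one_mem_fan ?_
      unfold fanCorner
      split_ifs <;> omega
  · obtain rfl : i = ℓ - 1 := by omega
    have hlast : fanCorner n ℓ (ℓ - 1) = 2 * n + 1 := by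
      rw [fanCorner, if_neg (by omega)]
      omega
    have hfirst : fanCorner n ℓ 0 = 0 := if_pos two_pos
    rw [polygonSide_last, hfirst, hlast]
    -- The two sides differ in their decidable equality on `ℕ`: classical in `polygonSide`.
    convert radius_mem_fan n

lemma isCrosscutNumber_expansion_fan {V : Type} [DecidableEq V] {e : ℕ ⊕ Finset ℕ × ℕ ↪ V}
    (k n : ℕ) : IsCrosscutNumber (expansion e k (fan n)) (n + 1) := by
  have hcard : #((range (n + 1)).image (2 * ·)) = n + 1 := by
    rw [card_image_of_injective _ (mul_right_injective₀ two_ne_zero), card_range]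
  rw [← hcard]
  refine isCrosscutNumber_expansion (isCrosscut_fan n) (s := range (n + 1))
    (M := fun i => Icc (2 * i) (2 * i + 1))
    (fun i hi => Icc_add_one_mem_fan (by rw [mem_range] at hi; omega))
    (fun i _ j _ hij => disjoint_left.2 fun v hvi hvj => ?_) (by rw [hcard, card_range])
  rw [mem_Icc] at hvi hvj
  omega

end Fan

/-- for all `k ≥ 5` and `ℓ ≥ 3` there is a 2-contractible `k`-tree `T`
containing the `k`-uniform linear cycle `C^(k)_ℓ` as a subgraph with cross-cut number
`σ(T) = ⌊(ℓ+1)/2⌋`. -/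
theorem stmt_19 (k ℓ : ℕ) (hk : 5 ≤ k) (hℓ : 3 ≤ ℓ) :
    ∃ T : Finset (Finset ℕ), IsKTree k T ∧ TwoContractible T ∧
      (∃ C ⊆ T, IsLinearCycle k ℓ C) ∧
      IsCrosscutNumber T ((ℓ + 1) / 2) := by
  obtain ⟨n, hn⟩ : ∃ n, n + 1 = (ℓ + 1) / 2 := ⟨(ℓ + 1) / 2 - 1, by omega⟩
  let e : ℕ ⊕ Finset ℕ × ℕ ↪ ℕ := Encodable.encode' _
  have hcard : ∀ E ∈ fan n, #E + 2 ≤ k := fun E hE => by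
    have := card_le_three_of_mem_fan hE
    omega
  have hside : ∀ i < ℓ, polygonSide (fanCorner n ℓ) ℓ i ∈ fan n := fun i =>
    polygonSide_fanCorner_mem_fan hℓ hn
  refine ⟨expansion e k (fan n),
    isKTree_expansion (isHypertree_fan n) fun E hE => Nat.le_of_add_right_le (hcard E hE),
    twoContractible_expansion hcard, ⟨_, ?_, isLinearCycle_padEdge_polygonSide (e := e)
      (strictMono_fanCorner n ℓ) hℓ fun i hi => ?_⟩, hn ▸ isCrosscutNumber_expansion_fan k n⟩
  · exact image_subset_iff.2 fun i hi => padEdge_mem_expansion (hside i (mem_range.1 hi))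
  · exact Nat.le_of_add_right_le (hcard _ (hside i hi))
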